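/- Let f ∈ R = K[x_0, …, x_n] be a quasi-homogeneous polynomial of type α whose degree equals w = α_0 + ⋯ + α_n, with an isolated singularity. If p ≥ n − 1, then fpt(f) = μ_f(p)/p = 1 − h/p, where h = p − μ_f(p) is an integer with 0 ≤ h ≤ n − 1. -/

import Mathlib

/-!
Write `w` for the common value of the degree of `f` and the sum of the weights, `J` for the Jacobian
ideal of `f`, and `q` for a power of `p`.

The algebraic input is that every homogeneous polynomial of degree greater than `(n - 1) w` lies in
`J` (`mem_jacobian`). The partial derivatives form a homogeneous regular sequence of degrees
`w - α_i`, so the Hilbert series `H` of `R/J` satisfies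
`H * ∏ (1 - t^{α_i}) = ∏ (1 - t^{w - α_i})`. Cancelling a factor `1 - t` for each variable leaves
`H * ∏ (1 + ⋯ + t^{α_i - 1}) = ∏ (1 + ⋯ + t^{w - α_i - 1})`, and as `H` has nonnegative
coefficients, its degree is at most `∑ (w - 2 α_i) = (n - 1) w` (`mem_of_regular`); that `R/J` has
finite length comes out at the same time.

If `k = μ_f(q)` is prime to `p`, then differentiating `f ^ k ∈ m^{[q]}` gives
`f ^ (k - 1) J ⊆ m^{[q]}`. Since `R/m^{[q]}` has its socle in degree `(q - 1) w`, some monomial of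
degree `(q - k) w` does not kill `f ^ (k - 1)` modulo `m^{[q]}`, so it is not in `J` and
`q - k ≤ n - 1` (`le_muF_add`). For `q = p` this bounds `h`.

Frobenius gives `p (μ_f(q) - 1) < μ_f(pq) ≤ p μ_f(q)`. If the second inequality is strict, then
`p` does not divide `μ_f(pq)`, whence `μ_f(pq) ≥ pq - (n - 1) ≥ pq - p` and `μ_f(q) = q`. Thus
`μ_f(p) < p` implies `μ_f(p^{e+1}) = p^e μ_f(p)` for all `e`; if `μ_f(p) = p`, the same equality
holds because `f ^ (p - 1)` then involves the socle monomial of `R/m^{[p]}`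
(`muF_pow_eq_of_muF_eq`). So the sequence `μ_f(p^e) / p^e` is constant from `e = 1` on.
-/

open MvPolynomial Filter Topology

/-- The Frobenius power `m^{[q]}` of the maximal ideal `m = (x_0, …, x_n)` of
`R = K[x_0, …, x_n]`, i.e. the ideal generated by `x_0^q, …, x_n^q`. -/
noncomputable def frobeniusPower (K : Type*) [Field K] (n q : ℕ) :
    Ideal (MvPolynomial (Fin (n + 1)) K) :=
  Ideal.span (Set.range fun i : Fin (n + 1) => (X i : MvPolynomial (Fin (n + 1)) K) ^ q)

/-- `μ_f(q) = min {k ∈ ℕ : f^k ∈ m^{[q]}}`. -/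
noncomputable def muF {K : Type*} [Field K] {n : ℕ}
    (f : MvPolynomial (Fin (n + 1)) K) (q : ℕ) : ℕ :=
  sInf {k : ℕ | f ^ k ∈ frobeniusPower K n q}

/-- `f` has an isolated singularity: its partial derivatives `∂f/∂x_0, …, ∂f/∂x_n`
form a regular sequence in `R`. -/
def HasIsolatedSingularity {K : Type*} [Field K] {n : ℕ}
    (f : MvPolynomial (Fin (n + 1)) K) : Prop :=
  RingTheory.Sequence.IsRegular (MvPolynomial (Fin (n + 1)) K)
    ((List.finRange (n + 1)).map fun i => MvPolynomial.pderiv i f)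

/-- `fpt(f) = c`: the sequence `μ_f(p^e)/p^e` converges to `c`. -/
def HasFpt {K : Type*} [Field K] {n : ℕ} (p : ℕ)
    (f : MvPolynomial (Fin (n + 1)) K) (c : ℝ) : Prop :=
  Tendsto (fun e : ℕ => (muF f (p ^ e) : ℝ) / ((p : ℝ) ^ e)) atTop (𝓝 c)

/-! ### Hilbert series of homogeneous complete intersections -/

section Hilbert

variable {K σ : Type*} [Field K] {N : ℕ}

attribute [local instance] MvPolynomial.weightedGradedAlgebra

/-- The Hilbert function `m ↦ dim_K (R/I)_m` of `R/I`, where `R` is graded by the weights `α`.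
It is encoded as the integer `dim R_m - dim (R_m ∩ I)`, which is meaningful for positive weights,
since then every `R_m` is finite-dimensional. -/
noncomputable def hilbertFn (α : σ → ℕ) (I : Ideal (MvPolynomial σ K)) (m : ℕ) : ℤ :=
  Module.finrank K (weightedHomogeneousSubmodule K α m) -
    Module.finrank K
      (weightedHomogeneousSubmodule K α m ⊓ I.restrictScalars K : Submodule K (MvPolynomial σ K))

/-- Identifies the two descriptions of graded pieces in Mathlib, so that the lemmas on
`DirectSum.decompose` apply to `weightedHomogeneousComponent`. -/
lemma decompose_eq_component (α : σ → ℕ) (g : MvPolynomial σ K) (m : ℕ) :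
    (DirectSum.decompose (weightedHomogeneousSubmodule K α) g m : MvPolynomial σ K) =
      weightedHomogeneousComponent α m g :=
  weightedDecomposition.decompose'_apply K α g m

lemma component_mul_add {α : σ → ℕ} {g : MvPolynomial σ K} {d : ℕ}
    (hg : g.IsWeightedHomogeneous α d) (b : MvPolynomial σ K) (j : ℕ) :
    weightedHomogeneousComponent α (d + j) (g * b) =
      g * weightedHomogeneousComponent α j b := by
  have h := DirectSum.coe_decompose_mul_add_of_left_mem (weightedHomogeneousSubmodule K α)
    (i := d) (j := j) (b := b) hg
  rwa [decompose_eq_component, decompose_eq_component] at h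

lemma component_mul_of_lt {α : σ → ℕ} {g : MvPolynomial σ K} {d m : ℕ}
    (hg : g.IsWeightedHomogeneous α d) (b : MvPolynomial σ K) (hm : m < d) :
    weightedHomogeneousComponent α m (g * b) = 0 := by
  rw [← decompose_eq_component]
  exact DirectSum.coe_decompose_mul_of_left_mem_of_not_le (weightedHomogeneousSubmodule K α)
    hg (not_le.2 hm)

lemma hilbertFn_sup_of_lt {α : σ → ℕ} {I : Ideal (MvPolynomial σ K)}
    (hI : I.IsHomogeneous (weightedHomogeneousSubmodule K α))
    {g : MvPolynomial σ K} {d m : ℕ} (hg : g.IsWeightedHomogeneous α d) (hm : m < d) :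
    hilbertFn α (I ⊔ Ideal.span {g}) m = hilbertFn α I m := by
  have key : weightedHomogeneousSubmodule K α m ⊓ (I ⊔ Ideal.span {g}).restrictScalars K =
      weightedHomogeneousSubmodule K α m ⊓ I.restrictScalars K := by
    ext x
    simp only [Submodule.mem_inf, Submodule.restrictScalars_mem]
    refine and_congr_right fun hx => ⟨fun h => ?_, fun h => Ideal.mem_sup_left h⟩
    obtain ⟨a, ha, y, hy, rfl⟩ := Submodule.mem_sup.1 h
    obtain ⟨b, rfl⟩ := Ideal.mem_span_singleton'.1 hy
    have h1 := IsWeightedHomogeneous.weightedHomogeneousComponent_same hx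
    rw [map_add, mul_comm b, component_mul_of_lt hg b hm, add_zero] at h1
    rw [mul_comm b, ← h1]
    exact weightedHomogeneousComponent_mem_of_mem K α hI ha m
  unfold hilbertFn
  rw [key]

variable [Finite σ]

lemma finiteDimensional_piece {α : σ → ℕ} (hα : ∀ i, 0 < α i) (m : ℕ) :
    FiniteDimensional K (weightedHomogeneousSubmodule K α m) :=
  Module.Finite.of_fg (weightedHomogeneousSubmodule_fg K α (fun i => (hα i).ne') m)

lemma hilbertFn_nonneg {α : σ → ℕ} (hα : ∀ i, 0 < α i) (I : Ideal (MvPolynomial σ K)) (m : ℕ) :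
    0 ≤ hilbertFn α I m := by
  have := finiteDimensional_piece (K := K) hα m
  have h := Submodule.finrank_mono (R := K)
    (inf_le_left : weightedHomogeneousSubmodule K α m ⊓ I.restrictScalars K ≤ _)
  unfold hilbertFn
  omega

lemma piece_le_of_hilbertFn_eq_zero {α : σ → ℕ} (hα : ∀ i, 0 < α i)
    {I : Ideal (MvPolynomial σ K)} {m : ℕ} (h : hilbertFn α I m = 0)
    {g : MvPolynomial σ K} (hg : g.IsWeightedHomogeneous α m) : g ∈ I := by
  have := finiteDimensional_piece (K := K) hα m
  have h1 := Submodule.eq_of_le_of_finrank_eq (K := K)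
    (inf_le_left : weightedHomogeneousSubmodule K α m ⊓ I.restrictScalars K ≤ _)
    (by unfold hilbertFn at h; omega)
  have h2 : g ∈ weightedHomogeneousSubmodule K α m := hg
  rw [← h1] at h2
  exact h2.2

/-- Additivity of dimension along `0 → (R/I)(-d) → R/I → R/(I + (g)) → 0`, where the first map is
multiplication by `g`, in degree `d + j`. -/
lemma hilbertFn_sup_add {α : σ → ℕ} (hα : ∀ i, 0 < α i) {I : Ideal (MvPolynomial σ K)}
    (hI : I.IsHomogeneous (weightedHomogeneousSubmodule K α))
    {g : MvPolynomial σ K} {d : ℕ} (hg : g.IsWeightedHomogeneous α d) (hg0 : g ≠ 0)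
    (hreg : ∀ x, g * x ∈ I → x ∈ I) (j : ℕ) :
    hilbertFn α (I ⊔ Ideal.span {g}) (d + j) = hilbertFn α I (d + j) - hilbertFn α I j := by
  set V := weightedHomogeneousSubmodule K α with hV
  have hinj : Function.Injective (LinearMap.mulLeft K g) := fun a b h => by
    simpa [hg0] using h
  have fin1 := finiteDimensional_piece (K := K) hα (d + j)
  have fin2 := finiteDimensional_piece (K := K) hα j
  have hsup : V (d + j) ⊓ (I ⊔ Ideal.span {g}).restrictScalars K =
      (V (d + j) ⊓ I.restrictScalars K) ⊔ (V j).map (LinearMap.mulLeft K g) := by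
    apply le_antisymm
    · rintro x ⟨hx, h⟩
      obtain ⟨a, ha, y, hy, rfl⟩ := Submodule.mem_sup.1 h
      obtain ⟨b, rfl⟩ := Ideal.mem_span_singleton'.1 hy
      have h1 := IsWeightedHomogeneous.weightedHomogeneousComponent_same hx
      rw [map_add, mul_comm b, component_mul_add hg b j] at h1
      rw [mul_comm b, ← h1]
      refine Submodule.add_mem_sup ⟨weightedHomogeneousComponent_mem _ _ _,
          weightedHomogeneousComponent_mem_of_mem K α hI ha _⟩
        ⟨_, weightedHomogeneousComponent_mem _ b _, rfl⟩
    · refine sup_le (inf_le_inf_left _ ?_) ?_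
      · exact fun x hx => Ideal.mem_sup_left hx
      · rintro _ ⟨b, hb, rfl⟩
        exact ⟨hg.mul hb, Ideal.mem_sup_right (Ideal.mul_mem_right _ _
          (Ideal.mem_span_singleton_self g))⟩
  have hinf : (V (d + j) ⊓ I.restrictScalars K) ⊓ (V j).map (LinearMap.mulLeft K g) =
      (V j ⊓ I.restrictScalars K).map (LinearMap.mulLeft K g) := by
    apply le_antisymm
    · rintro _ ⟨⟨_, hx⟩, ⟨b, hb, rfl⟩⟩
      exact ⟨b, ⟨hb, hreg b hx⟩, rfl⟩
    · rintro _ ⟨b, ⟨hb, hbI⟩, rfl⟩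
      exact ⟨⟨hg.mul hb, Ideal.mul_mem_left _ _ hbI⟩, ⟨b, hb, rfl⟩⟩
  have fin3 : FiniteDimensional K (V (d + j) ⊓ I.restrictScalars K : Submodule K _) :=
    Submodule.finiteDimensional_inf_left _ _
  have h := Submodule.finrank_sup_add_finrank_inf_eq (V (d + j) ⊓ I.restrictScalars K)
    ((V j).map (LinearMap.mulLeft K g))
  rw [← hsup, hinf, ← (Submodule.equivMapOfInjective _ hinj (V j)).finrank_eq,
    ← (Submodule.equivMapOfInjective _ hinj (V j ⊓ I.restrictScalars K)).finrank_eq] at h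
  unfold hilbertFn
  rw [← hV]
  omega

/-- The Hilbert series `∑ dim_K (R/I)_m t^m` of `R/I`, with integer coefficients. -/
noncomputable def hilbertSeries (α : σ → ℕ) (I : Ideal (MvPolynomial σ K)) : PowerSeries ℤ :=
  PowerSeries.mk (hilbertFn α I)

lemma hilbertSeries_sup {α : σ → ℕ} (hα : ∀ i, 0 < α i) {I : Ideal (MvPolynomial σ K)}
    (hI : I.IsHomogeneous (weightedHomogeneousSubmodule K α))
    {g : MvPolynomial σ K} {d : ℕ} (hg : g.IsWeightedHomogeneous α d) (hg0 : g ≠ 0)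
    (hreg : ∀ x, g * x ∈ I → x ∈ I) :
    hilbertSeries α (I ⊔ Ideal.span {g}) = hilbertSeries α I * (1 - PowerSeries.X ^ d) := by
  ext m
  rw [mul_sub, mul_one, map_sub, PowerSeries.coeff_mul_X_pow']
  simp only [hilbertSeries, PowerSeries.coeff_mk]
  split_ifs with h
  · obtain ⟨j, rfl⟩ := Nat.exists_eq_add_of_le h
    simpa using hilbertFn_sup_add hα hI hg hg0 hreg j
  · simpa using hilbertFn_sup_of_lt hI hg (not_le.1 h)

/-- The hypothesis `hreg` says that `g` is a weakly regular sequence. -/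
lemma hilbertSeries_regular {α : σ → ℕ} (hα : ∀ i, 0 < α i)
    (g : Fin N → MvPolynomial σ K) (d : Fin N → ℕ)
    (hg : ∀ i, (g i).IsWeightedHomogeneous α (d i)) (hg0 : ∀ i, g i ≠ 0)
    (hreg : ∀ i x, g i * x ∈ Ideal.span (g '' Set.Iio i) → x ∈ Ideal.span (g '' Set.Iio i)) :
    hilbertSeries α (Ideal.span (Set.range g)) =
      hilbertSeries α (⊥ : Ideal (MvPolynomial σ K)) * ∏ i, (1 - PowerSeries.X ^ d i) := by
  induction N with
  | zero => simp
  | succ N ih =>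
    have h1 : Set.range g = Set.range (fun i : Fin N => g i.castSucc) ∪ {g (Fin.last N)} := by
      ext x
      simp [Fin.exists_fin_succ', eq_comm, or_comm]
    have h2 : Set.Iio (Fin.last N) = Set.range Fin.castSucc := by
      ext x; simp [Fin.range_castSucc, Fin.lt_def]
    rw [Fin.prod_univ_castSucc, ← mul_assoc, ← ih (fun i => g i.castSucc) (fun i => d i.castSucc)
      (fun i => hg _) (fun i => hg0 _), h1, Ideal.span_union, hilbertSeries_sup hα _ (hg _) (hg0 _)]
    · intro x hx
      have h := hreg (Fin.last N) x
      rw [h2, ← Set.range_comp] at h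
      exact h hx
    · apply Ideal.homogeneous_span
      rintro _ ⟨i, rfl⟩
      exact ⟨_, hg i.castSucc⟩
    · intro i x
      have h := hreg i.castSucc x
      rw [← Fin.image_castSucc_Iio, ← Set.image_comp] at h
      exact h

/-- The Hilbert series of the polynomial ring is `∏ 1 / (1 - t^{α_i})`: the variables form a
regular sequence whose quotient is `K`, concentrated in degree `0`. -/
lemma hilbertSeries_bot_mul {α : Fin N → ℕ} (hα : ∀ i, 0 < α i) :
    hilbertSeries α (⊥ : Ideal (MvPolynomial (Fin N) K)) *
      ∏ i, (1 - PowerSeries.X ^ α i) = 1 := by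
  rw [← hilbertSeries_regular hα (fun i => X i) α (fun i => isWeightedHomogeneous_X K α i)
    (fun i => X_ne_zero i)]
  · ext m
    rw [hilbertSeries, PowerSeries.coeff_mk, PowerSeries.coeff_one]
    split_ifs with h
    · subst h
      have h1 : weightedHomogeneousSubmodule K α 0 = Submodule.span K {1} := by
        ext x
        rw [Submodule.mem_span_singleton]
        constructor
        · intro hx
          refine ⟨coeff 0 x, ?_⟩
          rw [← C_mul', mul_one]
          ext m
          rw [coeff_C]
          split_ifs with hm
          · rw [hm]
          · refine (hx.coeff_eq_zero m fun h => hm ?_).symm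
            ext i
            exact ((weightedDegree_eq_zero_iff
              (nonTorsionWeight_of fun i => (hα i).ne')).1 h i).symm
        · rintro ⟨c, rfl⟩
          exact Submodule.smul_mem _ _ (isWeightedHomogeneous_one K α)
      have h2 : weightedHomogeneousSubmodule K α 0 ⊓ (Ideal.span (Set.range
          fun i => (X i : MvPolynomial (Fin N) K))).restrictScalars K = ⊥ := by
        rw [eq_bot_iff, h1]
        rintro x ⟨hx, hxI⟩
        obtain ⟨c, rfl⟩ := Submodule.mem_span_singleton.1 hx
        have h3 : c • (1 : MvPolynomial (Fin N) K) ∈ Ideal.span (X '' Set.univ) := by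
          rw [Set.image_univ]; exact hxI
        rw [mem_ideal_span_X_image] at h3
        by_contra hc
        have hc0 : c ≠ 0 := by rintro rfl; simp at hc
        obtain ⟨i, -, hi⟩ := h3 0 (by simp [hc0])
        exact hi rfl
      rw [hilbertFn, h2, h1, finrank_span_singleton one_ne_zero]
      simp
    · have h1 : weightedHomogeneousSubmodule K α m ⊓ (Ideal.span (Set.range
          fun i => (X i : MvPolynomial (Fin N) K))).restrictScalars K =
          weightedHomogeneousSubmodule K α m := by
        rw [inf_eq_left]
        intro x hx
        change x ∈ Ideal.span (Set.range X)
        rw [← Set.image_univ, mem_ideal_span_X_image]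
        intro b hb
        by_contra! hcon
        have hb0 : b = 0 := by ext i; simpa using hcon i
        have := hx (mem_support_iff.1 hb)
        rw [hb0, map_zero] at this
        exact h this.symm
      rw [hilbertFn, h1, sub_self]
  · intro i x hx
    change _ ∈ Ideal.span (X '' _) at hx
    change _ ∈ Ideal.span (X '' _)
    rw [mem_ideal_span_X_image] at hx ⊢
    intro m hm
    obtain ⟨j, hj, hj0⟩ := hx (Finsupp.single i 1 + m) (by
      rw [mem_support_iff, coeff_X_mul]; exact mem_support_iff.1 hm)
    refine ⟨j, hj, ?_⟩
    have hij : i ≠ j := (Set.mem_Iio.1 hj).ne'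
    simpa [Finsupp.single_apply, hij] using hj0

/-- The polynomial `1 + t + ⋯ + t^{a-1}`, as a power series. -/
noncomputable def geomPoly (a : ℕ) : PowerSeries ℤ := ∑ j ∈ Finset.range a, PowerSeries.X ^ j

lemma one_sub_X_mul_geomPoly (a : ℕ) :
    (1 - PowerSeries.X) * geomPoly a = 1 - PowerSeries.X ^ a := by
  exact mul_neg_geom_sum _ _

lemma coeff_mul_geomPoly (H : PowerSeries ℤ) (a m : ℕ) :
    PowerSeries.coeff m (H * geomPoly a) =
      ∑ j ∈ Finset.range a, if j ≤ m then PowerSeries.coeff (m - j) H else 0 := by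
  simp [geomPoly, Finset.mul_sum, PowerSeries.coeff_mul_X_pow']

/-- If `H` has nonnegative coefficients and `t^m` occurs in `H`, then multiplying `t^m` by the top
monomials of the factors `1 + ⋯ + t^{a_i-1}` gives a monomial of the product, since no cancellation
can occur. -/
lemma mul_prod_geomPoly_pos {ι : Type*} (s : Finset ι) (a : ι → ℕ) (ha : ∀ i, 0 < a i)
    (H : PowerSeries ℤ) (hH : ∀ m, 0 ≤ PowerSeries.coeff m H) (m : ℕ)
    (hm : 0 < PowerSeries.coeff m H) :
    (∀ k, 0 ≤ PowerSeries.coeff k (H * ∏ i ∈ s, geomPoly (a i))) ∧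
      0 < PowerSeries.coeff (m + ∑ i ∈ s, (a i - 1)) (H * ∏ i ∈ s, geomPoly (a i)) := by
  classical
  induction s using Finset.induction_on with
  | empty => simpa using ⟨hH, hm⟩
  | insert i s hi ih =>
    have hnn : ∀ k j, 0 ≤ if j ≤ k then
        PowerSeries.coeff (k - j) (H * ∏ i ∈ s, geomPoly (a i)) else 0 := by
      intro k j
      split_ifs
      · exact ih.1 _
      · exact le_rfl
    rw [Finset.prod_insert hi, Finset.sum_insert hi, mul_comm (geomPoly (a i)), ← mul_assoc]
    refine ⟨fun k => ?_, ?_⟩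
    · rw [coeff_mul_geomPoly]
      exact Finset.sum_nonneg fun j _ => hnn k j
    · rw [coeff_mul_geomPoly]
      refine Finset.sum_pos' (fun j _ => hnn _ j) ⟨a i - 1, ?_, ?_⟩
      · have := ha i
        simp only [Finset.mem_range]; omega
      · rw [if_pos (by omega)]
        rw [show m + (a i - 1 + ∑ i ∈ s, (a i - 1)) - (a i - 1) = m + ∑ i ∈ s, (a i - 1) by omega]
        exact ih.2

lemma coeff_prod_geomPoly_eq_zero {ι : Type*} (s : Finset ι) (d : ι → ℕ) (m : ℕ)
    (hm : ∑ i ∈ s, (d i - 1) < m) : PowerSeries.coeff m (∏ i ∈ s, geomPoly (d i)) = 0 := by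
  classical
  induction s using Finset.induction_on generalizing m with
  | empty =>
    have : m ≠ 0 := by simp at hm; omega
    simp [PowerSeries.coeff_one, this]
  | insert i s hi ih =>
    rw [Finset.sum_insert hi] at hm
    rw [Finset.prod_insert hi, mul_comm, coeff_mul_geomPoly]
    refine Finset.sum_eq_zero fun j hj => ?_
    rw [Finset.mem_range] at hj
    rw [if_pos (by omega)]
    exact ih _ (by omega)

/-- A homogeneous regular sequence `g` of degrees `d_i`, as long as the number of variables, contains
in its ideal all homogeneous polynomials of degree greater than `∑ d_i - ∑ α_i`. Indeed the Hilbert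
series `H` of the quotient satisfies `H ∏ (1 + ⋯ + t^{α_i-1}) = ∏ (1 + ⋯ + t^{d_i-1})`, and by
positivity a monomial `t^m` of `H` forces `m + ∑ (α_i - 1) ≤ ∑ (d_i - 1)`. -/
theorem mem_of_regular {α : Fin N → ℕ} (hα : ∀ i, 0 < α i)
    (g : Fin N → MvPolynomial (Fin N) K) (d : Fin N → ℕ) (hd : ∀ i, 0 < d i)
    (hg : ∀ i, (g i).IsWeightedHomogeneous α (d i)) (hg0 : ∀ i, g i ≠ 0)
    (hreg : ∀ i x, g i * x ∈ Ideal.span (g '' Set.Iio i) → x ∈ Ideal.span (g '' Set.Iio i))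
    {m : ℕ} (hm : ∑ i, d i < m + ∑ i, α i) {x : MvPolynomial (Fin N) K}
    (hx : x.IsWeightedHomogeneous α m) : x ∈ Ideal.span (Set.range g) := by
  set H := hilbertSeries α (Ideal.span (Set.range g)) with hHdef
  have h1 : H * ∏ i, (1 - PowerSeries.X ^ α i) = ∏ i, (1 - PowerSeries.X ^ d i) := by
    rw [hHdef, hilbertSeries_regular hα g d hg hg0 hreg, mul_right_comm,
      hilbertSeries_bot_mul hα, one_mul]
  have h2 : H * ∏ i, geomPoly (α i) = ∏ i, geomPoly (d i) := by
    simp_rw [← one_sub_X_mul_geomPoly, Finset.prod_mul_distrib] at h1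
    have hX : (1 - PowerSeries.X : PowerSeries ℤ) ≠ 0 := fun h => by
      have := congrArg (PowerSeries.coeff 0) h
      simp at this
    have hX' : (∏ _i : Fin N, (1 - PowerSeries.X : PowerSeries ℤ)) ≠ 0 :=
      Finset.prod_ne_zero_iff.2 fun _ _ => hX
    refine mul_left_cancel₀ hX' ?_
    rw [← h1]; ring
  apply piece_le_of_hilbertFn_eq_zero hα _ hx
  by_contra hne
  have hpos : 0 < hilbertFn α (Ideal.span (Set.range g)) m :=
    lt_of_le_of_ne (hilbertFn_nonneg hα _ _) (Ne.symm hne)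
  have h3 := (mul_prod_geomPoly_pos Finset.univ α hα H
    (fun k => by simpa [H, hilbertSeries] using hilbertFn_nonneg hα _ k) m
    (by simpa [H, hilbertSeries] using hpos)).2
  rw [h2, coeff_prod_geomPoly_eq_zero] at h3
  · exact lt_irrefl _ h3
  · have e : ∀ a : Fin N → ℕ, (∀ i, 0 < a i) → ∑ i, (a i - 1) + N = ∑ i, a i := by
      intro a ha
      calc ∑ i, (a i - 1) + N = ∑ i, (a i - 1) + ∑ _i : Fin N, 1 := by simp
        _ = ∑ i, (a i - 1 + 1) := Finset.sum_add_distrib.symm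
        _ = ∑ i, a i := Finset.sum_congr rfl fun i _ => Nat.sub_add_cancel (ha i)
    have e1 := e d hd
    have e2 := e α hα
    omega

end Hilbert

/-! ### The Jacobian ideal and Frobenius powers -/

section Main

variable {K : Type*} [Field K] {n : ℕ}

/-- Unpacks the regularity of the list of partial derivatives into statements about ideals. -/
lemma jacobian_regular {f : MvPolynomial (Fin (n + 1)) K} (hsing : HasIsolatedSingularity f) :
    Ideal.span (Set.range fun i => pderiv i f) ≠ ⊤ ∧
    ∀ i x, pderiv i f * x ∈ Ideal.span ((fun i => pderiv i f) '' Set.Iio i) →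
      x ∈ Ideal.span ((fun i => pderiv i f) '' Set.Iio i) := by
  obtain ⟨hweak, htop⟩ := hsing
  constructor
  · intro h
    apply htop
    rw [Ideal.ofList, smul_eq_mul, Ideal.mul_top, ← h]
    congr 1
    ext x
    simp
  · intro i x hx
    have h := hweak.regular_mod_prev i (by simp [i.is_le])
    have e : Ideal.ofList (((List.finRange (n + 1)).map fun i => pderiv i f).take i) =
        Ideal.span ((fun i => pderiv i f) '' Set.Iio i) := by
      rw [Ideal.ofList]
      congr 1
      ext x
      simp only [Set.mem_ofPred_eq, List.mem_take_iff_getElem, Set.mem_image, Set.mem_Iio]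
      constructor
      · rintro ⟨j, hj, rfl⟩
        simp only [List.length_map, List.length_finRange, lt_min_iff] at hj
        exact ⟨⟨j, hj.2⟩, hj.1, by simp⟩
      · rintro ⟨j, hj, rfl⟩
        exact ⟨j, by simpa using hj, by simp⟩
    rw [e, smul_eq_mul, Ideal.mul_top] at h
    simp only [List.getElem_map, List.getElem_finRange, Fin.cast_mk, Fin.eta] at h
    rw [isSMulRegular_quotient_iff_mem_of_smul_mem] at h
    exact h x hx

lemma mem_frobeniusPower {q : ℕ} {g : MvPolynomial (Fin (n + 1)) K} :
    g ∈ frobeniusPower K n q ↔ ∀ m ∈ g.support, ∃ i, q ≤ m i := by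
  have h := @mem_ideal_span_monomial_image (Fin (n + 1)) K _ g
    (Set.range fun i => Finsupp.single i q)
  rw [← Set.range_comp] at h
  have e : ((fun s => monomial s (1 : K)) ∘ fun i : Fin (n + 1) => Finsupp.single i q) =
      fun i => X i ^ q := by
    ext1 i
    simp [X_pow_eq_monomial]
  rw [e] at h
  rw [frobeniusPower, h]
  simp

lemma pow_mem_frobeniusPower {p : ℕ} [Fact p.Prime] [CharP K p] {q : ℕ} (e : ℕ)
    {g : MvPolynomial (Fin (n + 1)) K} (hg : g ∈ frobeniusPower K n q) :
    g ^ p ^ e ∈ frobeniusPower K n (q * p ^ e) := by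
  unfold frobeniusPower at hg
  induction hg using Submodule.span_induction with
  | mem x h =>
    obtain ⟨i, rfl⟩ := h
    simp only [← pow_mul]
    exact Ideal.subset_span ⟨i, rfl⟩
  | zero => rw [zero_pow (pow_ne_zero _ (Fact.out : p.Prime).ne_zero)]; exact zero_mem _
  | add x y _ _ hx hy => rw [add_pow_char_pow]; exact add_mem hx hy
  | smul a x _ hx => rw [smul_eq_mul, mul_pow]; exact Ideal.mul_mem_left _ _ hx

/-- The instance of flatness of Frobenius that is needed; it holds since the coefficient of `g ^ p`
at `p • m` is the `p`-th power of the coefficient of `g` at `m`. -/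
lemma mem_of_pow_mem_frobeniusPower {p : ℕ} [Fact p.Prime] [CharP K p] {q : ℕ}
    {g : MvPolynomial (Fin (n + 1)) K} (hg : g ^ p ∈ frobeniusPower K n (p * q)) :
    g ∈ frobeniusPower K n q := by
  have hp : 0 < p := (Fact.out : p.Prime).pos
  rw [mem_frobeniusPower] at hg ⊢
  intro m hm
  obtain ⟨i, hi⟩ := hg (p • m) (by
    rw [mem_support_iff, ← map_frobenius_expand, coeff_map, coeff_expand_smul p hp.ne',
      frobenius_def]
    exact pow_ne_zero _ (mem_support_iff.1 hm))
  exact ⟨i, le_of_mul_le_mul_left (by simpa using hi) hp⟩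

lemma pderiv_mem_frobeniusPower {p : ℕ} [CharP K p] {q : ℕ} (hq : p ∣ q)
    {g : MvPolynomial (Fin (n + 1)) K} (hg : g ∈ frobeniusPower K n q) (i : Fin (n + 1)) :
    pderiv i g ∈ frobeniusPower K n q := by
  have hq0 : (q : MvPolynomial (Fin (n + 1)) K) = 0 := (CharP.cast_eq_zero_iff _ p q).2 hq
  have hg' := hg
  unfold frobeniusPower at hg'
  induction hg' using Submodule.span_induction with
  | mem x h =>
    obtain ⟨j, rfl⟩ := h
    simp only [Derivation.leibniz_pow, nsmul_eq_mul, hq0, zero_mul]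
    exact zero_mem _
  | zero => rw [map_zero]; exact zero_mem _
  | add x y hx' hy' hx hy => rw [map_add]; exact add_mem (hx hx') (hy hy')
  | smul a x hx' hx =>
    rw [smul_eq_mul, Derivation.leibniz, smul_eq_mul, smul_eq_mul]
    exact add_mem (Ideal.mul_mem_left _ _ (hx hx')) (Ideal.mul_mem_right _ _ hx')

lemma muF_le {f : MvPolynomial (Fin (n + 1)) K} {q k : ℕ} (h : f ^ k ∈ frobeniusPower K n q) :
    muF f q ≤ k := Nat.sInf_le h

lemma pow_mem_of_muF_le {f : MvPolynomial (Fin (n + 1)) K} {q k l : ℕ}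
    (h : f ^ l ∈ frobeniusPower K n q) (hk : muF f q ≤ k) : f ^ k ∈ frobeniusPower K n q :=
  Ideal.mem_of_dvd _ (pow_dvd_pow f hk)
    (Nat.sInf_mem (s := {k : ℕ | f ^ k ∈ frobeniusPower K n q}) ⟨l, h⟩)

lemma weight_eq_sum (α : Fin (n + 1) → ℕ) (m : Fin (n + 1) →₀ ℕ) :
    Finsupp.weight α m = ∑ i, m i * α i := by
  rw [Finsupp.weight_apply, Finsupp.sum_fintype _ _ (by simp)]
  simp

variable {p : ℕ} [CharP K p] {α : Fin (n + 1) → ℕ}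
  {f : MvPolynomial (Fin (n + 1)) K}

/-- Homogeneous polynomials of degree `m > (n - 1) w` lie in the Jacobian ideal, as
`∑ (w - α_i) - ∑ α_i = (n - 1) w`. -/
lemma mem_jacobian (hα : ∀ i, 0 < α i) (hf : f.IsWeightedHomogeneous α (∑ i, α i))
    (hsing : HasIsolatedSingularity f) {m : ℕ} (hm : n * ∑ i, α i < m + ∑ i, α i)
    {x : MvPolynomial (Fin (n + 1)) K} (hx : x.IsWeightedHomogeneous α m) :
    x ∈ Ideal.span (Set.range fun i => pderiv i f) := by
  obtain ⟨htop, hreg⟩ := jacobian_regular hsing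
  have hle : ∀ i, α i ≤ ∑ i, α i := fun i =>
    Finset.single_le_sum (fun j _ => Nat.zero_le (α j)) (Finset.mem_univ i)
  have hhom : ∀ i, (pderiv i f).IsWeightedHomogeneous α (∑ i, α i - α i) := fun i =>
    hf.pderiv (Nat.sub_add_cancel (hle i))
  have hne : ∀ i, pderiv i f ≠ 0 := by
    intro i hi
    apply htop
    have h1 := hreg i 1 (by rw [hi, zero_mul]; exact zero_mem _)
    rw [Ideal.eq_top_iff_one]
    exact Ideal.span_mono (Set.image_subset_range _ _) h1
  -- A partial derivative of degree `0` would be a nonzero constant, making the ideal trivial.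
  have hpos : ∀ i, 0 < ∑ i, α i - α i := by
    intro i
    by_contra h0
    have h1 := hhom i
    rw [Nat.eq_zero_of_not_pos h0, isWeightedHomogeneous_zero_iff_weightedTotalDegree_eq_zero,
      weightedTotalDegree_eq_zero_iff (nonTorsionWeight_of fun i => (hα i).ne')] at h1
    have hC : pderiv i f = C (coeff 0 (pderiv i f)) := by
      ext m
      rw [coeff_C]
      split_ifs with hm
      · rw [hm]
      · by_contra hc
        exact hm (Finsupp.ext fun j => (h1 m (mem_support_iff.2 hc) j).symm)
    have hc : coeff 0 (pderiv i f) ≠ 0 := fun h => hne i (by rw [hC, h, C_0])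
    refine htop (Ideal.eq_top_of_isUnit_mem _ (Ideal.subset_span ⟨i, rfl⟩) ?_)
    change IsUnit (pderiv i f)
    rw [hC]
    exact (IsUnit.mk0 _ hc).map C
  refine mem_of_regular hα _ (fun i => ∑ i, α i - α i) hpos hhom hne hreg ?_ hx
  have h1 : ∑ i, (∑ j, α j - α i) + ∑ i, α i = (n + 1) * ∑ i, α i := by
    rw [← Finset.sum_add_distrib, Finset.sum_congr rfl fun i _ => Nat.sub_add_cancel (hle i)]
    simp
  rw [add_mul, one_mul] at h1
  omega

/-- If `k = μ_f(q)` is prime to `p`, differentiating `f ^ k ∈ m^{[q]}` shows that `f ^ (k - 1)`, which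
is nonzero modulo `m^{[q]}`, is killed there by the Jacobian ideal. It has a multiple
`x^b f ^ (k - 1)` involving the socle monomial of degree `(q - 1) w`, so `x^b` is not in the
Jacobian ideal and `(q - 1) w - (k - 1) w = deg x^b ≤ (n - 1) w`. -/
lemma le_muF_add (hα : ∀ i, 0 < α i) (hf : f.IsWeightedHomogeneous α (∑ i, α i))
    (hsing : HasIsolatedSingularity f) {q l : ℕ} (hq : p ∣ q)
    (hl : f ^ l ∈ frobeniusPower K n q) (hk : ¬ p ∣ muF f q) : q + 1 ≤ muF f q + n := by
  obtain ⟨k, hk'⟩ : ∃ k, muF f q = k + 1 :=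
    Nat.exists_eq_succ_of_ne_zero fun h => hk (h ▸ dvd_zero p)
  have hmem : f ^ (k + 1) ∈ frobeniusPower K n q := pow_mem_of_muF_le hl hk'.le
  have hnot : f ^ k ∉ frobeniusPower K n q := fun h => by
    have := muF_le h
    omega
  have hJ : ∀ x ∈ Ideal.span (Set.range fun i => pderiv i f),
      x * f ^ k ∈ frobeniusPower K n q := by
    have hk0 : ((k + 1 : ℕ) : K) ≠ 0 := by
      rwa [Ne, CharP.cast_eq_zero_iff K p, ← hk']
    intro x hx
    induction hx using Submodule.span_induction with
    | mem x h =>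
      obtain ⟨i, rfl⟩ := h
      have h := pderiv_mem_frobeniusPower hq hmem i
      rw [Derivation.leibniz_pow, Nat.add_sub_cancel, smul_eq_mul, ← Nat.cast_smul_eq_nsmul K] at h
      have h' := Submodule.smul_of_tower_mem (frobeniusPower K n q) ((k + 1 : ℕ) : K)⁻¹ h
      rw [inv_smul_smul₀ hk0, mul_comm] at h'
      exact h'
    | zero => rw [zero_mul]; exact zero_mem _
    | add x y _ _ hx hy => rw [add_mul]; exact add_mem hx hy
    | smul a x _ hx => rw [smul_eq_mul, mul_assoc]; exact Ideal.mul_mem_left _ _ hx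
  rw [mem_frobeniusPower] at hnot
  push Not at hnot
  obtain ⟨a, ha, haq⟩ := hnot
  -- `x^b` is the complement of `x^a` in the socle monomial `(x_0 ⋯ x_n)^{q-1}`.
  let b : Fin (n + 1) →₀ ℕ := Finsupp.equivFunOnFinite.symm fun i => q - 1 - a i
  have hb : ∀ i, b i + a i = q - 1 := fun i => by
    have := haq i
    simp only [b, Finsupp.equivFunOnFinite_symm_apply_apply]
    omega
  have hq1 : 1 ≤ q := by have := haq 0; omega
  have hwa : Finsupp.weight α a = k * ∑ i, α i := by
    simpa using hf.pow k (mem_support_iff.1 ha)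
  have hwab : Finsupp.weight α b + Finsupp.weight α a = (q - 1) * ∑ i, α i := by
    rw [weight_eq_sum, weight_eq_sum, ← Finset.sum_add_distrib, Finset.mul_sum]
    refine Finset.sum_congr rfl fun i _ => ?_
    rw [← add_mul, hb]
  by_contra hcon
  have hxJ : monomial b (1 : K) ∈ Ideal.span (Set.range fun i => pderiv i f) := by
    refine mem_jacobian hα hf hsing (m := Finsupp.weight α b) ?_
      (isWeightedHomogeneous_monomial _ _ _ rfl)
    have hpos : 0 < ∑ i, α i := Finset.sum_pos (fun i _ => hα i) Finset.univ_nonempty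
    have h1 : (n + k) * ∑ i, α i < q * ∑ i, α i :=
      Nat.mul_lt_mul_of_pos_right (by omega) hpos
    obtain ⟨r, rfl⟩ := Nat.exists_eq_add_of_le' hq1
    rw [Nat.add_sub_cancel] at hwab
    rw [add_mul, add_mul, one_mul] at h1
    omega
  have h1 := mem_frobeniusPower.1 (hJ _ hxJ) (b + a) (by
    rw [mem_support_iff, coeff_monomial_mul, one_mul]; exact mem_support_iff.1 ha)
  obtain ⟨i, hi⟩ := h1
  rw [Finsupp.add_apply, hb] at hi
  omega

variable [Fact p.Prime]

lemma pow_self_mem (hα : ∀ i, 0 < α i) (hf : f.IsWeightedHomogeneous α (∑ i, α i)) (e : ℕ) :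
    f ^ p ^ e ∈ frobeniusPower K n (p ^ e) := by
  have h : f ∈ frobeniusPower K n 1 := by
    rw [mem_frobeniusPower]
    intro m hm
    by_contra! hcon
    have hm0 : m = 0 := by ext i; simpa using hcon i
    have h1 := hf (mem_support_iff.1 hm)
    rw [hm0, map_zero] at h1
    have h2 : 0 < ∑ i, α i := Finset.sum_pos (fun i _ => hα i) Finset.univ_nonempty
    omega
  simpa using pow_mem_frobeniusPower (p := p) e h

lemma muF_mul_le (hα : ∀ i, 0 < α i) (hf : f.IsWeightedHomogeneous α (∑ i, α i)) (e : ℕ) :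
    muF f (p ^ (e + 1)) ≤ p * muF f (p ^ e) := by
  apply muF_le
  have h := pow_mem_frobeniusPower (p := p) 1
    (pow_mem_of_muF_le (pow_self_mem (p := p) hα hf e) le_rfl)
  rwa [pow_one, ← pow_mul, ← pow_succ, mul_comm] at h

lemma lt_muF_mul (hα : ∀ i, 0 < α i) (hf : f.IsWeightedHomogeneous α (∑ i, α i)) {e k : ℕ}
    (hk : k < muF f (p ^ e)) : p * k < muF f (p ^ (e + 1)) := by
  by_contra! h
  have h1 := pow_mem_of_muF_le (pow_self_mem (p := p) hα hf (e + 1)) h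
  rw [mul_comm p, pow_mul, pow_succ' p] at h1
  have h2 := muF_le (mem_of_pow_mem_frobeniusPower h1)
  omega

/-- The case `h = 0`: modulo `m^{[p]}`, `f ^ (p - 1)` is a nonzero multiple of the socle monomial
`(x_0 ⋯ x_n)^{p-1}`, hence `f ^ (p^{e+1} - 1) = (f ^ (p - 1)) ^ p^e * f ^ (p^e - 1)` is nonzero
modulo `m^{[p^{e+1}]}` as soon as `f ^ (p^e - 1)` is nonzero modulo `m^{[p^e]}`. -/
lemma muF_pow_eq_of_muF_eq (hα : ∀ i, 0 < α i) (hf : f.IsWeightedHomogeneous α (∑ i, α i))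
    (h : muF f p = p) (e : ℕ) : muF f (p ^ e) = p ^ e := by
  have hp : p.Prime := Fact.out
  -- `s` is the exponent `(p - 1, …, p - 1)`, the only one in `f ^ (p - 1)` outside `m^{[p]}`.
  let s : Fin (n + 1) →₀ ℕ := Finsupp.equivFunOnFinite.symm fun _ => p - 1
  have hs : ∀ i, s i = p - 1 := fun i => by simp [s]
  have hnot : f ^ (p - 1) ∉ frobeniusPower K n p := fun h' => by
    have := muF_le h'
    have := hp.pos
    omega
  have huniq : ∀ a ∈ (f ^ (p - 1)).support, (∀ i, a i < p) → a = s := by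
    intro a ha hap
    have hwa : Finsupp.weight α a = (p - 1) * ∑ i, α i := by
      simpa using hf.pow (p - 1) (mem_support_iff.1 ha)
    rw [weight_eq_sum, Finset.mul_sum] at hwa
    have hle : ∀ i ∈ Finset.univ, a i * α i ≤ (p - 1) * α i := fun i _ =>
      Nat.mul_le_mul_right _ (Nat.le_sub_one_of_lt (hap i))
    have h1 := (Finset.sum_eq_sum_iff_of_le hle).1 hwa
    ext i
    rw [hs]
    exact Nat.eq_of_mul_eq_mul_right (hα i) (h1 i (Finset.mem_univ i))
  set c := coeff s (f ^ (p - 1)) with hc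
  have hc0 : c ≠ 0 := by
    rw [mem_frobeniusPower] at hnot
    push Not at hnot
    obtain ⟨a, ha, hap⟩ := hnot
    rw [hc, ← huniq a ha hap]
    exact mem_support_iff.1 ha
  have hr : f ^ (p - 1) - monomial s c ∈ frobeniusPower K n p := by
    rw [mem_frobeniusPower]
    intro a ha
    by_contra! hap
    rw [mem_support_iff, coeff_sub, coeff_monomial] at ha
    split_ifs at ha with has
    · rw [← has, ← hc, sub_self] at ha
      exact ha rfl
    · rw [sub_zero] at ha
      exact has (huniq a (mem_support_iff.2 ha) hap).symm
  have key : f ^ (p ^ e - 1) ∉ frobeniusPower K n (p ^ e) := by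
    induction e with
    | zero =>
      rw [mem_frobeniusPower]
      push Not
      exact ⟨0, by simp, by simp⟩
    | succ e ih =>
      intro hmem
      apply ih
      have hq : 1 ≤ p ^ e := Nat.one_le_pow _ _ hp.pos
      have hsplit : (p - 1) * p ^ e + p ^ e = p ^ (e + 1) := by
        rw [← Nat.succ_mul, Nat.succ_eq_add_one, Nat.sub_add_cancel hp.one_le, pow_succ']
      have hexp : p ^ (e + 1) - 1 = (p - 1) * p ^ e + (p ^ e - 1) := by
        rw [← hsplit, Nat.add_sub_assoc hq]
      have hr' := pow_mem_frobeniusPower (p := p) e hr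
      rw [sub_pow_char_pow, ← pow_succ', ← pow_mul, monomial_pow] at hr'
      have h2 : monomial (p ^ e • s) (c ^ p ^ e) * f ^ (p ^ e - 1) ∈
          frobeniusPower K n (p ^ (e + 1)) := by
        have h3 := Ideal.mul_mem_right (f ^ (p ^ e - 1)) _ hr'
        rw [sub_mul, ← pow_add, ← hexp] at h3
        simpa using sub_mem hmem h3
      rw [mem_frobeniusPower] at h2 ⊢
      intro a ha
      obtain ⟨i, hi⟩ := h2 (p ^ e • s + a) (by
        rw [mem_support_iff, coeff_monomial_mul]
        exact mul_ne_zero (pow_ne_zero _ hc0) (mem_support_iff.1 ha))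
      refine ⟨i, ?_⟩
      rw [Finsupp.add_apply, Finsupp.smul_apply, hs, smul_eq_mul, mul_comm, ← hsplit] at hi
      exact Nat.le_of_add_le_add_left hi
  refine le_antisymm (muF_le (pow_self_mem hα hf e)) ?_
  by_contra! hlt
  exact key (pow_mem_of_muF_le (pow_self_mem hα hf e) (Nat.le_sub_one_of_lt hlt))

/-- If `μ_f(pq) < p μ_f(q)`, then `μ_f(pq)` is prime to `p`, so `μ_f(pq) ≥ pq - (n - 1) ≥ pq - p`
and `μ_f(q) > q - 1`. This is impossible when `μ_f(p) < p`, because `μ_f(q) < q` by induction. -/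
lemma muF_pow_succ (hα : ∀ i, 0 < α i) (hf : f.IsWeightedHomogeneous α (∑ i, α i))
    (hsing : HasIsolatedSingularity f) (hp : n - 1 ≤ p) (e : ℕ) :
    muF f (p ^ (e + 1)) = p ^ e * muF f p := by
  have hp0 : 0 < p := (Fact.out : p.Prime).pos
  have hle : muF f p ≤ p := muF_le (by simpa using pow_self_mem (p := p) hα hf 1)
  rcases hle.eq_or_lt with h | h
  · rw [muF_pow_eq_of_muF_eq hα hf h, h, pow_succ]
  induction e with
  | zero => simp
  | succ e ih =>
    have hlt : muF f (p ^ (e + 1)) < p ^ (e + 1) := by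
      rw [ih, pow_succ]
      exact Nat.mul_lt_mul_of_pos_left h (pow_pos hp0 e)
    have h1 := muF_mul_le (p := p) hα hf (e + 1)
    rcases h1.eq_or_lt with h1 | h1
    · rw [h1, ih, pow_succ']; ring
    exfalso
    obtain ⟨k, hk⟩ : ∃ k, muF f (p ^ (e + 1)) = k + 1 :=
      Nat.exists_eq_succ_of_ne_zero fun h0 => by simp [h0] at h1
    have h2 := lt_muF_mul (p := p) hα hf (e := e + 1) (k := k) (by omega)
    -- `μ_f(pq)` lies strictly between the consecutive multiples `p * k` and `p * (k + 1)`.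
    have h3 : ¬ p ∣ muF f (p ^ (e + 2)) := by
      rintro ⟨c, hc⟩
      rw [hc] at h2
      rw [hk, hc] at h1
      have := lt_of_mul_lt_mul_left h2 hp0.le
      have := lt_of_mul_lt_mul_left h1 hp0.le
      omega
    have h4 := le_muF_add hα hf hsing (dvd_pow_self p (by omega))
      (pow_self_mem hα hf (e + 2)) h3
    have h5 : p * (muF f (p ^ (e + 1)) + 1) ≤ p * p ^ (e + 1) := Nat.mul_le_mul_left _ hlt
    rw [← pow_succ', mul_add] at h5
    change muF f (p ^ (e + 2)) < _ at h1
    change _ ≤ p ^ (e + 2) at h5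
    omega

end Main

/-- if `f` is quasi-homogeneous of type `α` of degree `w = α_0 + ⋯ + α_n`
with an isolated singularity and `p ≥ n − 1`, then `fpt(f) = μ_f(p)/p = 1 − h/p`, where
`h = p − μ_f(p)` satisfies `0 ≤ h ≤ n − 1`. -/
theorem statement10 {K : Type*} [Field K] {p : ℕ} [Fact p.Prime] [CharP K p] {n : ℕ}
    (α : Fin (n + 1) → ℕ) (hα : ∀ i, 0 < α i) (w : ℕ) (hw : w = ∑ i, α i)
    (f : MvPolynomial (Fin (n + 1)) K)
    (hf : f.IsWeightedHomogeneous α w)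
    (hsing : HasIsolatedSingularity f)
    (hp : n - 1 ≤ p) :
    ∃ h : ℕ, h ≤ n - 1 ∧ muF f p + h = p ∧
      (muF f p : ℝ) / (p : ℝ) = 1 - (h : ℝ) / (p : ℝ) ∧
      HasFpt p f (1 - (h : ℝ) / (p : ℝ)) := by
  subst hw
  have hp0 : 0 < p := (Fact.out : p.Prime).pos
  have hpR : (p : ℝ) ≠ 0 := by exact_mod_cast hp0.ne'
  have hmem : f ^ p ∈ frobeniusPower K n p := by simpa using pow_self_mem (p := p) hα hf 1
  have hle : muF f p ≤ p := muF_le hmem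
  have hsum : muF f p + (p - muF f p) = p := by omega
  have heq : (muF f p : ℝ) / (p : ℝ) = 1 - ((p - muF f p : ℕ) : ℝ) / (p : ℝ) := by
    rw [Nat.cast_sub hle]
    field_simp
    ring
  refine ⟨p - muF f p, ?_, hsum, heq, ?_⟩
  · by_cases hdvd : p ∣ muF f p
    · have hpos : muF f p ≠ 0 := by
        intro h0
        have h1 := pow_mem_of_muF_le hmem h0.le
        rw [mem_frobeniusPower] at h1
        obtain ⟨i, hi⟩ := h1 0 (by simp)
        simp at hi
        omega
      have := Nat.le_of_dvd (Nat.pos_of_ne_zero hpos) hdvd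
      omega
    · have := le_muF_add hα hf hsing dvd_rfl hmem hdvd
      omega
  · rw [← heq]
    refine tendsto_const_nhds.congr' ?_
    filter_upwards [eventually_ge_atTop 1] with e he
    obtain ⟨e, rfl⟩ := Nat.exists_eq_add_of_le' he
    rw [muF_pow_succ hα hf hsing hp, pow_succ, Nat.cast_mul, Nat.cast_pow]
    field_simp
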